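/- There are exactly 6 conjugacy classes of torsion-free subgroups of PSL(2,ℤ) of index 12 and genus zero. -/

import Mathlib

open Matrix

/-- `SL(2,ℤ)`: the group of 2×2 integer matrices of determinant 1. -/
abbrev SL2Z := Matrix.SpecialLinearGroup (Fin 2) ℤ

instance : Fact (Even (Fintype.card (Fin 2))) := ⟨by simp⟩

/-- The subgroup `{±I}` of `SL(2,ℤ)`. -/
def pmOne : Subgroup SL2Z := Subgroup.zpowers (-1 : SL2Z)

instance : pmOne.Normal := by
  constructor
  intro x hx g
  obtain ⟨n, rfl⟩ := hx
  have h : Commute ((-1 : SL2Z) ^ n) g := (Commute.neg_one_left g).zpow_left n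
  refine ⟨n, ?_⟩
  rw [← h.eq, mul_assoc, mul_inv_cancel, mul_one]

/-- `PSL(2,ℤ)`, the modular group, as the quotient of `SL(2,ℤ)` by `{±I}`. -/
abbrev PSL2Z := SL2Z ⧸ pmOne

/-- The natural projection `ξ : SL(2,ℤ) → PSL(2,ℤ)`. -/
def xi : SL2Z →* PSL2Z := QuotientGroup.mk' pmOne

/-- The element `S` of `PSL(2,ℤ)`, the image of `[[0,-1],[1,0]]`. -/
def Sp : PSL2Z := xi ⟨!![0, -1; 1, 0], by norm_num [Matrix.det_fin_two_of]⟩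

/-- The element `T` of `PSL(2,ℤ)`, the image of `[[1,1],[0,1]]`. -/
def Tp : PSL2Z := xi ⟨!![1, 1; 0, 1], by norm_num [Matrix.det_fin_two_of]⟩

/-- The number of left cosets in `PSL(2,ℤ)/Γ` fixed by `g` (for the
left-multiplication action).  For `g = S` this is `e₂(Γ)`, for `g = S*T` it is `e₃(Γ)`. -/
noncomputable def nFix (g : PSL2Z) (Γ : Subgroup PSL2Z) : ℕ :=
  Nat.card {x : PSL2Z ⧸ Γ // g • x = x}

/-- The number of orbits of the cyclic subgroup generated by `g` on `PSL(2,ℤ)/Γ`.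
For `g = S, S*T, T` these are `c₂(Γ), c₃(Γ), h(Γ)` respectively. -/
noncomputable def nOrb (g : PSL2Z) (Γ : Subgroup PSL2Z) : ℕ :=
  Nat.card (MulAction.orbitRel.Quotient (Subgroup.zpowers g) (PSL2Z ⧸ Γ))

/-- `Γ` has genus zero: `c₂(Γ) + c₃(Γ) + h(Γ) = index(Γ) + 2`. -/
def GenusZero (Γ : Subgroup PSL2Z) : Prop :=
  nOrb Sp Γ + nOrb (Sp * Tp) Γ + nOrb Tp Γ = Γ.index + 2

/-- `Γ` is torsion free: it contains no nontrivial element of finite order. -/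
def TorsionFree (Γ : Subgroup PSL2Z) : Prop :=
  ∀ x ∈ Γ, x ≠ 1 → ¬ IsOfFinOrder x

/-- Two subgroups of a group are conjugate. -/
def SubgroupConj {G : Type*} [Group G] (H K : Subgroup G) : Prop :=
  ∃ g : G, Subgroup.map (MulAut.conj g).toMonoidHom H = K

/-- The number of conjugacy classes of subgroups of `PSL(2,ℤ)` satisfying `P`. -/
noncomputable def countClasses (P : Subgroup PSL2Z → Prop) : ℕ :=
  Nat.card (Quot fun A B : {Γ : Subgroup PSL2Z // P Γ} => SubgroupConj A.1 B.1)

/-- The index of the torsion free subgroup `Γ^tf` associated to `Γ`: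
`index(Γ) + 3·e₂(Γ) + 2·e₃(Γ)`. -/
noncomputable def tfIdx (Γ : Subgroup PSL2Z) : ℕ :=
  Γ.index + 3 * nFix Sp Γ + 2 * nFix (Sp * Tp) Γ

/-!
On the `12` cosets of a torsion-free subgroup of index `12` neither `S` nor `ST` has a fixed point,
so the cosets are the darts of a connected cubic map on an oriented surface, with four vertices (the
orbits of `ST`) and six edges (the orbits of `S`); its faces are the orbits of `T`, and conjugate
subgroups give isomorphic maps. Genus zero means four faces. Their lengths add up to `12`, so there
is a face of length one, or one of length two, or all four are triangles. In each case following the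
few edges that are still free leaves six planar maps and two maps with only two faces. The six
planar maps are realised by congruence subgroups, and the numbers of cosets fixed by `T` and `T²`
tell them apart.
-/

section SubgroupConj

variable {G : Type*} [Group G]

theorem SubgroupConj.equivalence : Equivalence (SubgroupConj (G := G)) where
  refl H := ⟨1, by ext; simp⟩
  symm := by
    rintro H _ ⟨g, rfl⟩
    exact ⟨g⁻¹, by ext; simp [mul_assoc]⟩
  trans := by
    rintro H _ _ ⟨g, rfl⟩ ⟨k, rfl⟩
    refine ⟨k * g, ?_⟩
    rw [Subgroup.map_map, map_mul]
    rfl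

theorem card_quot_subgroupConj {ι : Type*} {P : Subgroup G → Prop} (Γ : ι → Subgroup G)
    (hP : ∀ i, P (Γ i)) (exhaustive : ∀ H, P H → ∃ i, SubgroupConj H (Γ i))
    (inequivalent : ∀ i j, SubgroupConj (Γ i) (Γ j) → i = j) :
    Nat.card (Quot fun A B : {H : Subgroup G // P H} => SubgroupConj A.1 B.1) = Nat.card ι := by
  have conj_equivalence : Equivalence fun A B : {H // P H} => SubgroupConj A.1 B.1 :=
    SubgroupConj.equivalence.comap Subtype.val
  refine (Nat.card_congr <| Equiv.ofBijective (fun i => Quot.mk _ ⟨Γ i, hP i⟩) ⟨?_, ?_⟩).symm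
  · intro i j hij
    exact inequivalent i j <| conj_equivalence.eqvGen_iff.mp (Quot.eqvGen_exact hij)
  · rintro ⟨H, hH⟩
    obtain ⟨i, hi⟩ := exhaustive H hH
    exact ⟨i, Quot.sound (SubgroupConj.equivalence.symm hi)⟩

theorem subgroupConj_of_equivariant {H K : Subgroup G} [H.FiniteIndex] (hidx : H.index = K.index)
    (f : G ⧸ H → G ⧸ K) (hf : ∀ (g : G) x, f (g • x) = g • f x) : SubgroupConj K H := by
  obtain ⟨g, hg⟩ := QuotientGroup.mk_surjective (f (1 : G))
  have stabilizer_image :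
      MulAction.stabilizer G (f (1 : G)) = K.map (MulAut.conj g).toMonoidHom := by
    rw [← hg, ← mul_one g, ← smul_eq_mul, ← MulAction.Quotient.smul_coe,
      MulAction.stabilizer_smul_eq_stabilizer_map_conj, smul_eq_mul, mul_one]
    exact congrArg _ (MulAction.stabilizer_quotient K)
  have le : H ≤ K.map (MulAut.conj g).toMonoidHom := by
    rw [← stabilizer_image]
    intro h hh
    rw [← MulAction.stabilizer_quotient H, MulAction.mem_stabilizer_iff] at hh
    rw [MulAction.mem_stabilizer_iff, ← hf, hh]
  refine ⟨g, le_antisymm ?_ le⟩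
  have relIndex_mul := Subgroup.relIndex_mul_index le
  have index_conj : (K.map (MulAut.conj g).toMonoidHom).index = K.index :=
    Subgroup.index_map_equiv K (MulAut.conj g)
  rw [index_conj, hidx, Nat.mul_eq_right (hidx ▸ Subgroup.FiniteIndex.index_ne_zero)]
    at relIndex_mul
  exact Subgroup.relIndex_eq_one.mp relIndex_mul

theorem SubgroupConj.exists_equivariant_equiv {H K : Subgroup G} (h : SubgroupConj H K) :
    ∃ f : G ⧸ H ≃ G ⧸ K, ∀ (g : G) x, f (g • x) = g • f x := by
  obtain ⟨k, rfl⟩ := h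
  have rel_iff (a b : G) : QuotientGroup.leftRel H a b ↔
      QuotientGroup.leftRel (H.map (MulAut.conj k).toMonoidHom) (a * k⁻¹) (b * k⁻¹) := by
    have conj_eq : (a * k⁻¹)⁻¹ * (b * k⁻¹) = (MulAut.conj k).toMonoidHom (a⁻¹ * b) := by
      simp [mul_assoc]
    rw [QuotientGroup.leftRel_apply, QuotientGroup.leftRel_apply, conj_eq]
    exact (Subgroup.mem_map_iff_mem (MulAut.conj k).injective).symm
  refine ⟨Quotient.congr (Equiv.mulRight k⁻¹) rel_iff, fun g x => ?_⟩
  induction x using QuotientGroup.induction_on with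
  | H z => exact congrArg QuotientGroup.mk (mul_assoc g z k⁻¹)

theorem SubgroupConj.natCard_fixed_eq {H K : Subgroup G} (h : SubgroupConj H K) (g : G) :
    Nat.card {x : G ⧸ H // g • x = x} = Nat.card {x : G ⧸ K // g • x = x} := by
  obtain ⟨f, hf⟩ := h.exists_equivariant_equiv
  refine Nat.card_congr (f.subtypeEquiv fun x => ?_)
  rw [← hf, f.apply_eq_iff_eq]

end SubgroupConj

section OrbitCounting

open MulAction Subgroup

variable {G X : Type*} [Group G] [MulAction G X] {g : G}

theorem period_eq_prime {p : ℕ} (hp : p.Prime) (hg : g ^ p = 1) {x : X} (hx : g • x ≠ x) :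
    period g x = p := by
  have : Fact p.Prime := ⟨hp⟩
  exact Function.minimalPeriod_eq_prime (by
    rw [Function.IsPeriodicPt, smul_iterate, hg]; exact one_smul G x) hx

theorem apply_zpow_smul {α : Type*} {c : X → α} (invariant : ∀ x, c (g • x) = c x)
    (n : ℤ) (x : X) : c (g ^ n • x) = c x := by
  induction n with
  | zero => simp
  | succ n ih => rw [add_comm, _root_.zpow_one_add, mul_smul, invariant, ih]
  | pred n ih => rw [← ih, ← invariant (g ^ (_ - 1) • x), ← mul_smul, ← _root_.zpow_one_add]; simp

theorem natCard_orbits_eq_natCard_range {α : Type*} (c : X → α) (invariant : ∀ x, c (g • x) = c x)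
    (separating : ∀ x y, c x = c y → ∃ n : ℕ, g ^ n • x = y) :
    Nat.card (orbitRel.Quotient (zpowers g) X) = Nat.card (Set.range c) := by
  have eq_of_rel : ∀ x y, orbitRel (zpowers g) X x y → c x = c y := by
    rintro _ y ⟨⟨_, n, rfl⟩, rfl⟩
    exact apply_zpow_smul invariant n y
  refine Nat.card_congr <| Equiv.ofBijective
    (Quotient.lift (Set.rangeFactorization c) fun x y h => Subtype.ext (eq_of_rel x y h)) ⟨?_, ?_⟩
  · rintro ⟨x⟩ ⟨y⟩ h
    obtain ⟨n, rfl⟩ := separating y x (congrArg Subtype.val h).symm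
    exact Quotient.sound ⟨⟨g ^ n, npow_mem_zpowers g n⟩, rfl⟩
  · rintro ⟨_, x, rfl⟩
    exact ⟨Quotient.mk _ x, rfl⟩

variable [Finite X] (g)

theorem natCard_orbit_zpowers (x : X) : Nat.card (orbit (zpowers g) x) = period g x := by
  have := Fintype.ofFinite (orbit (zpowers g) x)
  rw [Nat.card_eq_fintype_card, ← minimalPeriod_eq_card, period_eq_minimalPeriod]

theorem natCard_eq_sum_period [Fintype (orbitRel.Quotient (zpowers g) X)] :
    Nat.card X = ∑ ω : orbitRel.Quotient (zpowers g) X, period g ω.out := by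
  simp_rw [Nat.card_congr (selfEquivSigmaOrbits (zpowers g) X), Nat.card_sigma,
    natCard_orbit_zpowers]

variable {g} {m : ℕ}

theorem natCard_eq_mul_of_period_eq (h : ∀ x : X, period g x = m) :
    Nat.card X = Nat.card (orbitRel.Quotient (zpowers g) X) * m := by
  have := Fintype.ofFinite (orbitRel.Quotient (zpowers g) X)
  simp [natCard_eq_sum_period g, h]

theorem period_eq_of_natCard_eq_mul (hle : ∀ x : X, m ≤ period g x)
    (hcard : Nat.card X = Nat.card (orbitRel.Quotient (zpowers g) X) * m) (x : X) :
    period g x = m := by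
  have := Fintype.ofFinite (orbitRel.Quotient (zpowers g) X)
  have sum_eq : ∑ _ω : orbitRel.Quotient (zpowers g) X, m =
      ∑ ω : orbitRel.Quotient (zpowers g) X, period g ω.out := by
    rw [← natCard_eq_sum_period, hcard, Finset.sum_const, smul_eq_mul, Finset.card_univ,
      Nat.card_eq_fintype_card]
  have out_eq := (Finset.sum_eq_sum_iff_of_le fun ω _ => hle ω.out).mp sum_eq
  rw [← natCard_orbit_zpowers, out_eq (Quotient.mk'' x) (Finset.mem_univ _),
    ← natCard_orbit_zpowers, orbit_eq_iff.mpr]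
  exact orbitRel_apply.mp (Quotient.exact' (Quotient.out_eq' (Quotient.mk'' x)).symm)

end OrbitCounting

section Generators

variable {G X Y : Type*} [Group G] [MulAction G X] [MulAction G Y] {s : Set G}

theorem map_smul_of_submonoidClosure_eq_top (hs : Submonoid.closure s = ⊤) {f : X → Y}
    (hf : ∀ g ∈ s, ∀ x, f (g • x) = g • f x) (g : G) (x : X) : f (g • x) = g • f x := by
  induction g using Submonoid.induction_of_closure_eq_top_left hs with
  | one => rw [one_smul, one_smul]
  | mul_left g hg h ih => rw [mul_smul, mul_smul, hf g hg, ih]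

theorem eq_univ_of_submonoidClosure_eq_top [MulAction.IsPretransitive G X]
    (hs : Submonoid.closure s = ⊤) {A : Set X} (hne : A.Nonempty)
    (hA : ∀ g ∈ s, ∀ x ∈ A, g • x ∈ A) : A = Set.univ := by
  obtain ⟨x, hx⟩ := hne
  refine Set.eq_univ_of_forall fun y => ?_
  obtain ⟨g, rfl⟩ := MulAction.exists_smul_eq G x y
  induction g using Submonoid.induction_of_closure_eq_top_left hs with
  | one => rwa [one_smul]
  | mul_left g hg h ih => exact mul_smul g h x ▸ hA g hg _ ih

end Generators

section ModularGroup

theorem mem_pmOne_iff {A : SL2Z} : A ∈ pmOne ↔ A = 1 ∨ A = -1 := by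
  refine ⟨?_, ?_⟩
  · rintro ⟨n, rfl⟩
    exact (Int.even_or_odd n).imp (·.neg_one_zpow) (·.neg_one_zpow)
  · rintro (rfl | rfl)
    exacts [one_mem _, Subgroup.mem_zpowers _]

theorem xi_eq_one_iff {A : SL2Z} : xi A = 1 ↔ A = 1 ∨ A = -1 :=
  (QuotientGroup.eq_one_iff A).trans mem_pmOne_iff

theorem xi_surjective : Function.Surjective xi := QuotientGroup.mk'_surjective pmOne

theorem xi_neg (A : SL2Z) : xi (-A) = xi A := by
  rw [← neg_one_mul, map_mul, xi_eq_one_iff.mpr (.inr rfl), one_mul]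

theorem Sp_eq_xi : Sp = xi ModularGroup.S := rfl

theorem Tp_eq_xi : Tp = xi ModularGroup.T := rfl

theorem Sp_sq : Sp ^ 2 = 1 := by
  rw [Sp_eq_xi, ← map_pow, xi_eq_one_iff]; decide

theorem Sp_mul_Tp_cube : (Sp * Tp) ^ 3 = 1 := by
  rw [Sp_eq_xi, Tp_eq_xi, ← map_mul, ← map_pow, xi_eq_one_iff]; decide

theorem Sp_ne_one : Sp ≠ 1 := by
  rw [Sp_eq_xi, Ne, xi_eq_one_iff]; decide

theorem Sp_mul_Tp_ne_one : Sp * Tp ≠ 1 := by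
  rw [Sp_eq_xi, Tp_eq_xi, ← map_mul, Ne, xi_eq_one_iff]; decide

theorem isOfFinOrder_Sp : IsOfFinOrder Sp :=
  isOfFinOrder_iff_pow_eq_one.mpr ⟨2, two_pos, Sp_sq⟩

theorem isOfFinOrder_Sp_mul_Tp : IsOfFinOrder (Sp * Tp) :=
  isOfFinOrder_iff_pow_eq_one.mpr ⟨3, three_pos, Sp_mul_Tp_cube⟩

theorem closure_Sp_Tp : Subgroup.closure {Sp, Tp} = (⊤ : Subgroup PSL2Z) := by
  have map_closure := congrArg (Subgroup.map xi) SpecialLinearGroup.SL2Z_generators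
  rwa [MonoidHom.map_closure, Set.image_pair, Subgroup.map_top_of_surjective _ xi_surjective]
    at map_closure

theorem submonoidClosure_Sp_Sp_mul_Tp :
    Submonoid.closure {Sp, Sp * Tp} = (⊤ : Submonoid PSL2Z) := by
  have finite_orders : ∀ g ∈ ({Sp, Sp * Tp} : Set PSL2Z), IsOfFinOrder g := by
    rintro g (rfl | rfl)
    exacts [isOfFinOrder_Sp, isOfFinOrder_Sp_mul_Tp]
  rw [← Subgroup.closure_toSubmonoid_of_isOfFinOrder finite_orders,
    ← Subgroup.top_toSubmonoid, Subgroup.toSubmonoid_inj, eq_top_iff, ← closure_Sp_Tp,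
    Subgroup.closure_le]
  have Sp_mem : Sp ∈ Subgroup.closure {Sp, Sp * Tp} := Subgroup.subset_closure (.inl rfl)
  rintro g (rfl | rfl)
  · exact Sp_mem
  · exact (Subgroup.mul_mem_cancel_left _ Sp_mem).mp (Subgroup.subset_closure (.inr rfl))

theorem TorsionFree.smul_ne {Γ : Subgroup PSL2Z} (hΓ : TorsionFree Γ) {g : PSL2Z}
    (hg : IsOfFinOrder g) (hne : g ≠ 1) (x : PSL2Z ⧸ Γ) : g • x ≠ x := by
  induction x using QuotientGroup.induction_on with
  | H z =>
    intro hfix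
    have conj_mem : MulAut.conj z⁻¹ g ∈ Γ := by
      have := QuotientGroup.eq.mp (show ((z : PSL2Z) : PSL2Z ⧸ Γ) = (g * z : PSL2Z) from hfix.symm)
      simpa [mul_assoc] using this
    exact hΓ _ conj_mem ((MulEquiv.map_ne_one_iff _).mpr hne)
      ((MulAut.conj z⁻¹).toMonoidHom.isOfFinOrder hg)

end ModularGroup

section Torsion

theorem sq_eq_trace_smul_sub_one (A : SL2Z) : A.1 ^ 2 = A.1.trace • A.1 - 1 := by
  have := Matrix.aeval_self_charpoly A.1
  simp only [Matrix.charpoly_fin_two, A.det_coe, map_add, map_sub, map_mul, map_pow,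
    Polynomial.aeval_X, Polynomial.aeval_C, map_one] at this
  rw [Algebra.smul_def, ← sub_eq_zero, ← this]
  noncomm_ring

theorem exists_pow_succ_eq_smul_sub {A : SL2Z} (ht : 2 ≤ A.1.trace) (n : ℕ) :
    ∃ x y : ℤ, 0 ≤ y ∧ y < x ∧ (A ^ (n + 1)).1 = x • A.1 - y • 1 := by
  induction n with
  | zero => exact ⟨1, 0, by simp⟩
  | succ n ih =>
    obtain ⟨x, y, hy, hxy, hpow⟩ := ih
    refine ⟨x * A.1.trace - y, x, by lia, by nlinarith, ?_⟩
    calc (A ^ (n + 1 + 1)).1 = (A ^ (n + 1)).1 * A.1 := by rw [pow_succ]; rfl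
      _ = x • A.1 ^ 2 - y • A.1 := by rw [hpow, sub_mul, smul_mul_assoc, ← sq, smul_one_mul]
      _ = (x * A.1.trace - y) • A.1 - x • 1 := by rw [sq_eq_trace_smul_sub_one]; module

theorem xi_eq_one_of_two_le_trace {A : SL2Z} (hA : IsOfFinOrder (xi A)) (ht : 2 ≤ A.1.trace) :
    xi A = 1 := by
  obtain ⟨n, hn, hpow⟩ := isOfFinOrder_iff_pow_eq_one.mp hA
  obtain ⟨m, rfl⟩ := Nat.exists_eq_add_one.mpr hn
  obtain ⟨x, y, hy, hxy, hxA⟩ := exists_pow_succ_eq_smul_sub ht m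
  obtain ⟨ε, hε⟩ : ∃ ε : ℤ, (A ^ (m + 1)).1 = ε • 1 := by
    rw [← map_pow, xi_eq_one_iff] at hpow
    rcases hpow with h | h
    exacts [⟨1, by simp [h]⟩, ⟨-1, by simp [h]⟩]
  have scalar : x • A.1 = (ε + y) • 1 := by rw [add_smul, ← hε, hxA, sub_add_cancel]
  have entry (i j) : x * A i j = (ε + y) * (1 : Matrix (Fin 2) (Fin 2) ℤ) i j :=
    congrFun₂ scalar i j
  have hx : x ≠ 0 := by lia
  have h01 : A 0 1 = 0 := by simpa [hx] using entry 0 1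
  have h10 : A 1 0 = 0 := by simpa [hx] using entry 1 0
  have diag_eq : A 0 0 = A 1 1 := mul_left_cancel₀ hx ((entry 0 0).trans (entry 1 1).symm)
  have det_eq : A 0 0 * A 1 1 = 1 := by simpa [h01] using (det_fin_two A.1).symm.trans A.2
  rw [trace_fin_two] at ht
  have h00 : A 0 0 = 1 := by nlinarith
  refine xi_eq_one_iff.mpr (.inl ?_)
  ext i j
  fin_cases i <;> fin_cases j <;> simp [h00, h01, h10, ← diag_eq]

theorem torsionFree_map_xi {H : Subgroup SL2Z} (h : ∀ A ∈ H, 2 ≤ |A.1.trace|) :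
    TorsionFree (H.map xi) := by
  rintro _ ⟨A, hA, rfl⟩ hne hfin
  rcases le_abs.mp (h A hA) with ht | ht
  · exact hne (xi_eq_one_of_two_le_trace hfin ht)
  · rw [← xi_neg] at hne hfin
    exact hne (xi_eq_one_of_two_le_trace hfin (by simpa using ht))

end Torsion

/-- A cubic map on an oriented surface, given by its darts (half-edges): `edge` pairs each dart
with the other half of its edge, and `rot` turns each dart to the next one around its vertex. -/
structure CubicMap (X : Type*) where
  edge : X → X
  rot : X → X
  edge_edge (x : X) : edge (edge x) = x
  edge_ne (x : X) : edge x ≠ x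
  rot_rot_rot (x : X) : rot (rot (rot x)) = x
  rot_ne (x : X) : rot x ≠ x

namespace CubicMap

variable {X : Type*} (M : CubicMap X)

/-- Connectedness of the surface: a nonempty set of darts stable under both permutations
contains every dart. -/
def Connected : Prop :=
  ∀ A : Set X, A.Nonempty → (∀ x ∈ A, M.edge x ∈ A) → (∀ x ∈ A, M.rot x ∈ A) → A = Set.univ

/-- The boundary walk of a face: its orbits are the faces of the map, and orbit lengths are the
face lengths. -/
def face (x : X) : X := M.edge (M.rot x)

/-- The darts at `n` vertices, a vertex being given by a base dart: `(a, k)` is the `k`-th dart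
after the base dart `y a`. -/
def dart {n : ℕ} (y : Fin n → X) (j : Fin n × Fin 3) : X := M.rot^[j.2] (y j.1)

/-- The darts `x` and `d` start at the same vertex. -/
def SameVertex (x d : X) : Prop := d = x ∨ d = M.rot x ∨ d = M.rot (M.rot x)

variable {M} {n : ℕ} {y : Fin n → X}

theorem rot_dart (y : Fin n → X) (a : Fin n) (k : Fin 3) :
    M.rot (M.dart y (a, k)) = M.dart y (a, k + 1) := by
  fin_cases k
  exacts [rfl, rfl, M.rot_rot_rot (y a)]

theorem edge_injective : Function.Injective M.edge :=
  Function.Involutive.injective M.edge_edge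

theorem rot_injective : Function.Injective M.rot := fun x z h => by
  rw [← M.rot_rot_rot x, h, M.rot_rot_rot]

theorem rot_rot_ne (x : X) : M.rot (M.rot x) ≠ x := fun h =>
  M.rot_ne x (by rw [← h, M.rot_rot_rot, h])

theorem Connected.dart_surjective (hM : M.Connected) [NeZero n]
    (hy : ∀ j, M.edge (M.dart y j) ∈ Set.range (M.dart y)) :
    Function.Surjective (M.dart y) := by
  refine Set.range_eq_univ.mp (hM _ (Set.range_nonempty _) (Set.forall_mem_range.mpr hy) ?_)
  rintro _ ⟨⟨a, k⟩, rfl⟩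
  exact ⟨(a, k + 1), (rot_dart y a k).symm⟩

theorem SameVertex.trans_symm {x z d : X} (hx : M.SameVertex x d) (hz : M.SameVertex z d) :
    M.SameVertex x z := by
  have := M.rot_rot_rot
  unfold SameVertex at *
  grind

theorem sameVertex_iff_exists_dart {l : List X} {i : Fin l.length} {d : X} :
    M.SameVertex (l.get i) d ↔ ∃ k, M.dart l.get (i, k) = d := by
  simp only [SameVertex, Fin.exists_fin_succ, eq_comm (a := d)]
  simp [dart]

theorem sameVertex_dart (l : List X) (j : Fin l.length × Fin 3) :
    M.SameVertex (l.get j.1) (M.dart l.get j) :=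
  sameVertex_iff_exists_dart.mpr ⟨j.2, rfl⟩

theorem Connected.exists_edge_leaving [Finite X] (hM : M.Connected) {l : List X} (hl : l ≠ [])
    (hcard : l.length * 3 < Nat.card X) :
    ∃ x ∈ l, ∃ d, M.SameVertex x d ∧ ∀ z ∈ l, ¬ M.SameVertex z (M.edge d) := by
  by_contra! h
  have : NeZero l.length := ⟨mt List.length_eq_zero_iff.mp hl⟩
  have surjective : Function.Surjective (M.dart l.get) := hM.dart_surjective fun j => by
    obtain ⟨z, hz, hd⟩ := h _ (l.get_mem j.1) _ (sameVertex_dart l j)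
    obtain ⟨i, rfl⟩ := List.get_of_mem hz
    obtain ⟨k, hk⟩ := sameVertex_iff_exists_dart.mp hd
    exact ⟨(i, k), hk⟩
  have card_le := Nat.card_le_card_of_surjective _ surjective
  simp only [Nat.card_prod, Nat.card_fin] at card_le
  lia

theorem dart_injective {l : List X} (hl : l.Pairwise fun x z => ¬ M.SameVertex x z) :
    Function.Injective (M.dart l.get) := by
  rintro ⟨i, k⟩ ⟨j, m⟩ h
  have hi := sameVertex_dart (M := M) l (i, k)
  have hj := sameVertex_dart (M := M) l (j, m)
  rw [← h] at hj
  obtain rfl : i = j := by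
    rcases lt_trichotomy i j with hij | hij | hij
    · exact absurd (hi.trans_symm hj) (List.pairwise_iff_get.mp hl i j hij)
    · exact hij
    · exact absurd (hj.trans_symm hi) (List.pairwise_iff_get.mp hl j i hij)
  have rot_ne := M.rot_ne (l.get i)
  have rot_rot_ne := M.rot_rot_ne (l.get i)
  have rot_rot_ne_rot := M.rot_ne (M.rot (l.get i))
  fin_cases k <;> fin_cases m <;> simp_all [dart, eq_comm]

theorem exists_sameVertex_of_pairwise [Finite X] {l : List X}
    (hl : l.Pairwise fun x z => ¬ M.SameVertex x z) (hcard : Nat.card X = l.length * 3) (d : X) :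
    ∃ x ∈ l, M.SameVertex x d := by
  have bijective := (Nat.bijective_iff_injective_and_card (M.dart l.get)).mpr
    ⟨dart_injective hl, by simp [hcard]⟩
  obtain ⟨j, rfl⟩ := bijective.surjective d
  exact ⟨_, l.get_mem j.1, sameVertex_dart l j⟩

end CubicMap

/-- The edges of a cubic map on four vertices, each listed as a pair of darts; `(a, k)` is the
`k`-th dart at the vertex `a`, as in `CubicMap.dart`. -/
abbrev EdgeTable := List ((Fin 4 × Fin 3) × (Fin 4 × Fin 3))

/-- The edge tables of the planar cubic maps on four vertices. Their face lengths are, in order,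
`3333`, `4422`, `5511`, `8211`, `6321` and `9111`. -/
def planarEdges : Fin 6 → EdgeTable :=
  ![[((0, 0), (1, 0)), ((0, 1), (2, 0)), ((0, 2), (3, 0)),
      ((1, 1), (3, 2)), ((2, 1), (1, 2)), ((3, 1), (2, 2))],
    [((0, 0), (1, 1)), ((0, 1), (1, 0)), ((0, 2), (2, 0)),
      ((1, 2), (3, 0)), ((2, 1), (3, 2)), ((2, 2), (3, 1))],
    [((0, 0), (0, 1)), ((0, 2), (1, 0)), ((1, 1), (2, 0)),
      ((1, 2), (2, 1)), ((2, 2), (3, 0)), ((3, 1), (3, 2))],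
    [((0, 0), (0, 1)), ((0, 2), (1, 0)), ((1, 1), (2, 0)),
      ((1, 2), (2, 2)), ((2, 1), (3, 0)), ((3, 1), (3, 2))],
    [((0, 0), (0, 1)), ((0, 2), (1, 0)), ((1, 1), (2, 0)),
      ((1, 2), (3, 0)), ((2, 1), (3, 2)), ((2, 2), (3, 1))],
    [((0, 0), (0, 1)), ((0, 2), (1, 0)), ((1, 1), (2, 0)),
      ((1, 2), (3, 0)), ((2, 1), (2, 2)), ((3, 1), (3, 2))]]

/-- The two edge tables of cubic maps of genus one met in the classification, obtained from
`planarEdges 1` and `planarEdges 4` by crossing two edges. -/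
def toricEdges : Fin 2 → EdgeTable :=
  ![[((0, 0), (1, 1)), ((0, 1), (1, 0)), ((0, 2), (2, 0)),
      ((1, 2), (3, 0)), ((2, 1), (3, 1)), ((2, 2), (3, 2))],
    [((0, 0), (0, 1)), ((0, 2), (1, 0)), ((1, 1), (2, 0)),
      ((1, 2), (3, 0)), ((2, 1), (3, 1)), ((2, 2), (3, 2))]]

namespace CubicMap

variable {X : Type*} (M : CubicMap X)

/-- The base darts `y` identify the vertices of `M` with those of the edge table `l`, in such a way
that the pairs in `l` become edges of `M`. -/
def Labels (y : Fin 4 → X) (l : EdgeTable) : Prop :=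
  ∀ p ∈ l, M.edge (M.dart y p.1) = M.dart y p.2

/-- The darts `x` and `y` start at different vertices, and just two edges leave this pair of
vertices: those whose other halves are `z` and `w`. -/
structure TwoExits (x y z w : X) : Prop where
  not_sameVertex : ¬ M.SameVertex x y
  ne : z ≠ w
  outside : ∀ a ∈ [x, y], ¬ M.SameVertex a z ∧ ¬ M.SameVertex a w
  edge_fst : ∃ a ∈ [x, y], M.SameVertex a (M.edge z)
  edge_snd : ∃ a ∈ [x, y], M.SameVertex a (M.edge w)
  stays : ∀ a ∈ [x, y], ∀ d, M.SameVertex a d →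
    (∃ b ∈ [x, y], M.SameVertex b (M.edge d)) ∨ M.edge d = z ∨ M.edge d = w

variable {M} {x y z w : X}

attribute [local grind] edge_edge rot_rot_rot edge_ne rot_ne rot_rot_ne rot_injective

theorem labels_of_face_face_face [Nonempty X] (triangle : ∀ x, M.face (M.face (M.face x)) = x) :
    ∃ y, M.Labels y (planarEdges 0) := by
  have edge_rot_edge_rot (x : X) :
      M.edge (M.rot (M.edge (M.rot x))) = M.rot (M.rot (M.edge x)) := by
    have := triangle x
    unfold face at this
    grind
  obtain ⟨x⟩ := ‹Nonempty X›
  refine ⟨![x, M.edge x, M.edge (M.rot x), M.edge (M.rot (M.rot x))], ?_⟩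
  have h₀ := edge_rot_edge_rot x
  have h₁ := edge_rot_edge_rot (M.rot x)
  have h₂ := edge_rot_edge_rot (M.rot (M.rot x))
  rw [M.rot_rot_rot] at h₂
  simp [Labels, planarEdges, dart, h₀, h₁, h₂]

theorem SameVertex.of_rot {a d : X} (h : M.SameVertex a (M.rot d)) : M.SameVertex a d := by
  unfold SameVertex at *
  grind [!edge_edge, !rot_rot_rot]

theorem SameVertex.symm {a d : X} (h : M.SameVertex a d) : M.SameVertex d a := by
  unfold SameVertex at *
  grind

variable [Finite X] (hM : M.Connected)

include hM in
theorem Connected.loop_of_forall_ne {l : List X} (hne : l ≠ [])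
    (hl : l.Pairwise fun a b => ¬ M.SameVertex a b) (hcard : Nat.card X = (l.length + 1) * 3)
    {t : X} (stays : ∀ a ∈ l, ∀ d ≠ t, M.SameVertex a d → ∃ b ∈ l, M.SameVertex b (M.edge d)) :
    M.edge (M.rot (M.edge t)) = M.rot (M.rot (M.edge t)) := by
  obtain ⟨a, ha, d, had, leaves⟩ := hM.exists_edge_leaving hne (by lia)
  obtain rfl : d = t := by grind
  obtain ⟨b, hb, hbd⟩ := exists_sameVertex_of_pairwise (l := M.edge d :: l)
    (List.pairwise_cons.mpr ⟨fun b hb h => leaves b hb h.symm, hl⟩) (by simpa using hcard)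
    (M.edge (M.rot (M.edge d)))
  rcases List.mem_cons.mp hb with rfl | hb
  · rcases hbd with h | h | h
    · exact absurd (SameVertex.of_rot (by rwa [edge_injective h])) (leaves a ha)
    · exact absurd h (M.edge_ne _)
    · exact h
  · obtain ⟨c, hc, hcd⟩ := stays b hb _ (by grind) hbd
    rw [M.edge_edge] at hcd
    exact absurd hcd.of_rot (leaves c hc)

theorem TwoExits.matching (h : M.TwoExits x y z w) (hX : Nat.card X = 12)
    (hzw : ¬ M.SameVertex z w) :
    (M.edge (M.rot z) = M.rot (M.rot z) ∧ M.edge (M.rot w) = M.rot (M.rot w)) ∨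
    (M.edge (M.rot z) = M.rot (M.rot w) ∧ M.edge (M.rot (M.rot z)) = M.rot w) ∨
    (M.edge (M.rot z) = M.rot w ∧ M.edge (M.rot (M.rot z)) = M.rot (M.rot w)) := by
  obtain ⟨hxy, _, outside, edge_z, edge_w, stays⟩ := h
  have pairwise : [x, y, z, w].Pairwise fun a b => ¬ M.SameVertex a b := by simp_all
  have partner {d : X} (hd : d = M.rot z ∨ d = M.rot (M.rot z) ∨ d = M.rot w ∨
      d = M.rot (M.rot w)) : M.edge d = M.rot z ∨ M.edge d = M.rot (M.rot z) ∨
      M.edge d = M.rot w ∨ M.edge d = M.rot (M.rot w) := by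
    have not_at_xy (a) (ha : a ∈ [x, y]) : ¬ M.SameVertex a d := by
      have := outside a ha
      unfold SameVertex at this ⊢
      grind [!edge_edge, !rot_rot_rot]
    have edge_not_at_xy (a) (ha : a ∈ [x, y]) : ¬ M.SameVertex a (M.edge d) := fun h => by
      have := stays a ha _ h
      grind [SameVertex]
    have cover := exists_sameVertex_of_pairwise pairwise hX (M.edge d)
    simp only [List.mem_cons, List.not_mem_nil, SameVertex] at cover edge_not_at_xy
    grind
  have partner_rot_z := partner (.inl rfl)
  have partner_rot_rot_z := partner (.inr (.inl rfl))
  have partner_rot_w := partner (.inr (.inr (.inl rfl)))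
  simp only [SameVertex] at hzw
  grind [!edge_edge, !rot_rot_rot]

include hM in
theorem TwoExits.loop_beyond (h : M.TwoExits x y z w) (hX : Nat.card X = 12)
    (hzw : M.SameVertex z w) :
    (w = M.rot z ∧ M.edge (M.rot (M.edge (M.rot (M.rot z)))) =
      M.rot (M.rot (M.edge (M.rot (M.rot z))))) ∨
    (w = M.rot (M.rot z) ∧ M.edge (M.rot (M.edge (M.rot z))) =
      M.rot (M.rot (M.edge (M.rot z)))) := by
  obtain ⟨hxy, hne, outside, edge_z, edge_w, stays⟩ := h
  have loop {t : X} (ht : ∀ d ≠ t, M.SameVertex z d → d = z ∨ d = w) :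
      M.edge (M.rot (M.edge t)) = M.rot (M.rot (M.edge t)) := by
    refine hM.loop_of_forall_ne (l := [x, y, z]) (by simp) (by simp_all) (by simp [hX]) ?_
    have at_z : M.SameVertex z z := .inl rfl
    simp only [List.mem_cons, List.not_mem_nil] at *
    grind
  rcases hzw with rfl | rfl | rfl
  · exact absurd rfl hne
  · exact .inl ⟨rfl, loop (by unfold SameVertex; grind)⟩
  · exact .inr ⟨rfl, loop (by unfold SameVertex; grind)⟩

variable (hX : Nat.card X = 12)
include hM hX

theorem not_sameVertex_of_loop (loop : M.edge x = M.rot x) :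
    ¬ M.SameVertex x (M.edge (M.rot (M.rot x))) := by
  have leaving := hM.exists_edge_leaving (l := [x]) (by simp) (by simp [hX])
  simp only [List.mem_singleton, SameVertex] at *
  grind

theorem twoExits_of_loop (loop : M.edge x = M.rot x) (hy : M.edge (M.rot (M.rot x)) = y) :
    M.TwoExits x y (M.edge (M.rot y)) (M.edge (M.rot (M.rot y))) := by
  have hxy := hy ▸ not_sameVertex_of_loop hM hX loop
  have leaving := hM.exists_edge_leaving (l := [x, y]) (by simp) (by simp [hX])
  refine ⟨hxy, by grind [!edge_edge, !rot_rot_rot], ?_, ⟨y, ?_⟩, ⟨y, ?_⟩, ?_⟩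
  · simp only [List.mem_cons, List.not_mem_nil, SameVertex] at *
    grind [!edge_edge, !rot_rot_rot]
  all_goals
    clear leaving hxy
    simp only [List.mem_cons, List.not_mem_nil, SameVertex]
    grind

theorem twoExits_of_digon (noLoop : ∀ d, M.edge d ≠ M.rot d) (hy : M.edge (M.rot x) = y)
    (hx : M.edge (M.rot y) = x) :
    M.TwoExits x y (M.edge (M.rot (M.rot x))) (M.edge (M.rot (M.rot y))) := by
  have hxy : ¬ M.SameVertex x y := by
    unfold SameVertex
    grind
  have leaving := hM.exists_edge_leaving (l := [x, y]) (by simp) (by simp [hX])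
  refine ⟨hxy, ?_, ?_, ⟨x, ?_⟩, ⟨y, ?_⟩, ?_⟩
  · unfold SameVertex at hxy
    grind [!edge_edge, !rot_rot_rot]
  · simp only [List.mem_cons, List.not_mem_nil, SameVertex] at *
    grind
  all_goals
    clear leaving hxy
    simp only [List.mem_cons, List.not_mem_nil, SameVertex]
    grind

theorem exists_labels_of_loop (loop : M.edge x = M.rot x) :
    (∃ i y, M.Labels y (planarEdges i)) ∨ ∃ i y, M.Labels y (toricEdges i) := by
  obtain ⟨y, hy⟩ : ∃ y, M.edge (M.rot (M.rot x)) = y := ⟨_, rfl⟩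
  obtain ⟨z, hz⟩ : ∃ z, M.edge (M.rot y) = z := ⟨_, rfl⟩
  obtain ⟨w, hw⟩ : ∃ w, M.edge (M.rot (M.rot y)) = w := ⟨_, rfl⟩
  have exits := twoExits_of_loop hM hX loop hy
  rw [hz, hw] at exits
  by_cases hzw : M.SameVertex z w
  · rcases exits.loop_beyond hM hX hzw with ⟨rfl, h⟩ | ⟨rfl, h⟩
    · exact .inl ⟨2, ![x, y, z, M.edge (M.rot (M.rot z))], by simp [Labels, planarEdges, dart, *]⟩
    · exact .inl ⟨3, ![x, y, z, M.edge (M.rot z)], by simp [Labels, planarEdges, dart, *]⟩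
  · rcases exits.matching hX hzw with ⟨h, h'⟩ | ⟨h, h'⟩ | ⟨h, h'⟩
    · exact .inl ⟨5, ![x, y, z, w], by simp [Labels, planarEdges, dart, *]⟩
    · exact .inl ⟨4, ![x, y, z, w], by simp [Labels, planarEdges, dart, *]⟩
    · exact .inr ⟨1, ![x, y, z, w], by simp [Labels, toricEdges, dart, *]⟩

theorem exists_labels_of_digon (noLoop : ∀ d, M.edge d ≠ M.rot d)
    (digon : M.face (M.face x) = x) :
    (∃ i y, M.Labels y (planarEdges i)) ∨ ∃ i y, M.Labels y (toricEdges i) := by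
  obtain ⟨y, hy⟩ : ∃ y, M.edge (M.rot x) = y := ⟨_, rfl⟩
  obtain ⟨z, hz⟩ : ∃ z, M.edge (M.rot (M.rot x)) = z := ⟨_, rfl⟩
  obtain ⟨w, hw⟩ : ∃ w, M.edge (M.rot (M.rot y)) = w := ⟨_, rfl⟩
  have hx : M.edge (M.rot y) = x := hy ▸ digon
  have edge_x : M.edge x = M.rot y := by rw [← hx, M.edge_edge]
  have exits := twoExits_of_digon hM hX noLoop hy hx
  rw [hz, hw] at exits
  have hzw : ¬ M.SameVertex z w := fun hzw => by
    rcases exits.loop_beyond hM hX hzw with h | h <;> exact noLoop _ h.2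
  rcases exits.matching hX hzw with ⟨h, -⟩ | ⟨h, h'⟩ | ⟨h, h'⟩
  · exact absurd h (noLoop _)
  · exact .inl ⟨1, ![x, y, z, w], by simp [Labels, planarEdges, dart, *]⟩
  · exact .inr ⟨0, ![x, y, z, w], by simp [Labels, toricEdges, dart, *]⟩

theorem exists_labels (short_face : (∃ x, M.face x = x) ∨ (∃ x, M.face (M.face x) = x) ∨
      ∀ x, M.face (M.face (M.face x)) = x) :
    (∃ i y, M.Labels y (planarEdges i)) ∨ ∃ i y, M.Labels y (toricEdges i) := by
  by_cases! noLoop : ∀ d, M.edge d ≠ M.rot d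
  · rcases short_face with ⟨x, hx⟩ | ⟨x, hx⟩ | triangle
    · exact absurd ((congrArg M.edge hx).symm.trans (M.edge_edge _)) (noLoop x)
    · exact exists_labels_of_digon hM hX noLoop hx
    · have : Nonempty X := (Nat.card_pos_iff.mp (by lia)).1
      exact .inl ⟨0, labels_of_face_face_face triangle⟩
  · obtain ⟨x, hx⟩ := noLoop
    exact exists_labels_of_loop hM hX hx

end CubicMap

namespace EdgeTable

/-- The other half of the edge containing a dart, computed by composing the transpositions of the
edges in the table. -/
def partner (l : EdgeTable) (j : Fin 4 × Fin 3) : Fin 4 × Fin 3 :=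
  l.foldr (fun p => Equiv.swap p.1 p.2) j

/-- Every dart lies on an edge of the table. -/
def Complete (l : EdgeTable) : Prop := ∀ j, (j, l.partner j) ∈ l ∨ (l.partner j, j) ∈ l

/-- The boundary walk of a face, as in `CubicMap.face`. -/
def face (l : EdgeTable) (j : Fin 4 × Fin 3) : Fin 4 × Fin 3 := l.partner (j.1, j.2 + 1)

/-- The darts on the boundary of the face through `j`; the bound `12` is the number of all darts. -/
def faceDarts (l : EdgeTable) (j : Fin 4 × Fin 3) : Finset (Fin 4 × Fin 3) :=
  (Finset.range 12).image fun n => l.face^[n] j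

theorem exists_iterate_of_faceDarts_eq (l : EdgeTable) {j k : Fin 4 × Fin 3}
    (h : l.faceDarts j = l.faceDarts k) : ∃ n, l.face^[n] j = k := by
  have hk : k ∈ l.faceDarts j := by
    rw [h]
    exact Finset.mem_image_of_mem (fun n => l.face^[n] k) (Finset.mem_range.mpr (Nat.succ_pos 11))
  obtain ⟨n, -, hn⟩ := Finset.mem_image.mp hk
  exact ⟨n, hn⟩

end EdgeTable

theorem planarEdges_complete (i : Fin 6) : (planarEdges i).Complete := by
  unfold EdgeTable.Complete
  decide +revert +kernel

theorem toricEdges_complete (i : Fin 2) : (toricEdges i).Complete := by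
  unfold EdgeTable.Complete
  decide +revert +kernel

theorem faceDarts_face_planarEdges (i : Fin 6) (j : Fin 4 × Fin 3) :
    (planarEdges i).faceDarts ((planarEdges i).face j) = (planarEdges i).faceDarts j := by
  decide +revert +kernel

theorem faceDarts_face_toricEdges (i : Fin 2) (j : Fin 4 × Fin 3) :
    (toricEdges i).faceDarts ((toricEdges i).face j) = (toricEdges i).faceDarts j := by
  decide +revert +kernel

theorem card_faces_planarEdges (i : Fin 6) :
    (Finset.univ.image (planarEdges i).faceDarts).card = 4 := by
  decide +revert +kernel

theorem card_faces_toricEdges (i : Fin 2) :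
    (Finset.univ.image (toricEdges i).faceDarts).card = 2 := by
  decide +revert +kernel

namespace CubicMap

variable {X : Type*} {M : CubicMap X} {l : EdgeTable} {y : Fin 4 → X}

theorem Labels.edge_dart (h : M.Labels y l) (hl : l.Complete) (j : Fin 4 × Fin 3) :
    M.edge (M.dart y j) = M.dart y (l.partner j) := by
  rcases hl j with hj | hj
  · exact h _ hj
  · rw [← h _ hj, M.edge_edge]

theorem Labels.face_dart (h : M.Labels y l) (hl : l.Complete) (j : Fin 4 × Fin 3) :
    M.face (M.dart y j) = M.dart y (l.face j) := by
  rw [face, rot_dart, h.edge_dart hl]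
  rfl

theorem Labels.dart_surjective (h : M.Labels y l) (hl : l.Complete) (hM : M.Connected) :
    Function.Surjective (M.dart y) :=
  hM.dart_surjective fun j => ⟨l.partner j, (h.edge_dart hl j).symm⟩

theorem Labels.dart_bijective [Finite X] (h : M.Labels y l) (hl : l.Complete) (hM : M.Connected)
    (hX : Nat.card X = 12) : Function.Bijective (M.dart y) :=
  (Nat.bijective_iff_surjective_and_card _).mpr ⟨h.dart_surjective hl hM, by simp [hX]⟩

end CubicMap

section CosetMap

variable {Γ : Subgroup PSL2Z}

/-- The cubic map drawn by `S` and `ST` on the cosets of a torsion-free subgroup of the modular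
group; torsion-freeness makes both permutations free of fixed points. -/
def TorsionFree.cosetMap (hΓ : TorsionFree Γ) : CubicMap (PSL2Z ⧸ Γ) where
  edge x := Sp • x
  rot x := (Sp * Tp) • x
  edge_edge x := by rw [← mul_smul, ← sq, Sp_sq, one_smul]
  edge_ne := hΓ.smul_ne isOfFinOrder_Sp Sp_ne_one
  rot_rot_rot x := by rw [← mul_smul, ← mul_smul, ← pow_three', Sp_mul_Tp_cube, one_smul]
  rot_ne := hΓ.smul_ne isOfFinOrder_Sp_mul_Tp Sp_mul_Tp_ne_one

variable (hΓ : TorsionFree Γ)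

theorem cosetMap_face (x : PSL2Z ⧸ Γ) : hΓ.cosetMap.face x = Tp • x := by
  simp only [CubicMap.face, TorsionFree.cosetMap]
  rw [← mul_smul, ← mul_assoc, ← sq, Sp_sq, one_mul]

theorem cosetMap_connected : hΓ.cosetMap.Connected := fun A hA edge_mem rot_mem =>
  eq_univ_of_submonoidClosure_eq_top submonoidClosure_Sp_Sp_mul_Tp hA <| by
    rintro g (rfl | rfl)
    exacts [edge_mem, rot_mem]

section Labelled

variable {hΓ} {l : EdgeTable} {y : Fin 4 → PSL2Z ⧸ Γ} (hy : hΓ.cosetMap.Labels y l)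
  (hl : l.Complete)

include hy hl

theorem Tp_pow_smul_dart (n : ℕ) (j : Fin 4 × Fin 3) :
    Tp ^ n • hΓ.cosetMap.dart y j = hΓ.cosetMap.dart y (l.face^[n] j) := by
  induction n with
  | zero => exact one_smul _ _
  | succ n ih =>
    rw [pow_succ', mul_smul, ih, ← cosetMap_face hΓ, hy.face_dart hl,
      Function.iterate_succ_apply']

variable (bijective : Function.Bijective (hΓ.cosetMap.dart y))

include bijective

theorem nFix_Tp_pow_eq_card (n : ℕ) :
    nFix (Tp ^ n) Γ = Fintype.card {j // l.face^[n] j = j} := by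
  rw [← Nat.card_eq_fintype_card]
  refine (Nat.card_congr <| (Equiv.ofBijective _ bijective).subtypeEquiv fun j => ?_).symm
  rw [Equiv.ofBijective_apply, Tp_pow_smul_dart hy hl, bijective.injective.eq_iff]

theorem nOrb_Tp_eq_card_faces (faceDarts_face : ∀ j, l.faceDarts (l.face j) = l.faceDarts j) :
    nOrb Tp Γ = (Finset.univ.image l.faceDarts).card := by
  let e := Equiv.ofBijective _ bijective
  have invariant (x) : l.faceDarts (e.symm (Tp • x)) = l.faceDarts (e.symm x) := by
    obtain ⟨j, rfl⟩ := e.surjective x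
    have Tp_smul : Tp • e j = e (l.face j) := pow_one Tp ▸ Tp_pow_smul_dart hy hl 1 j
    rw [Tp_smul, e.symm_apply_apply, e.symm_apply_apply, faceDarts_face]
  have separating (x z) (h : l.faceDarts (e.symm x) = l.faceDarts (e.symm z)) :
      ∃ n : ℕ, Tp ^ n • x = z := by
    obtain ⟨n, hn⟩ := l.exists_iterate_of_faceDarts_eq h
    refine ⟨n, ?_⟩
    rw [← e.apply_symm_apply x, ← e.apply_symm_apply z, ← hn]
    exact Tp_pow_smul_dart hy hl n _
  refine (natCard_orbits_eq_natCard_range (l.faceDarts ∘ e.symm) invariant separating).trans ?_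
  rw [Function.Surjective.range_comp e.symm.surjective l.faceDarts, ← Set.image_univ,
    ← Finset.coe_univ, ← Finset.coe_image, Nat.card_coe_set_eq, Set.ncard_coe_finset]

end Labelled

include hΓ

theorem nOrb_Sp_mul_two [Γ.FiniteIndex] : nOrb Sp Γ * 2 = Γ.index :=
  (natCard_eq_mul_of_period_eq fun x : PSL2Z ⧸ Γ => period_eq_prime Nat.prime_two Sp_sq
    (hΓ.smul_ne isOfFinOrder_Sp Sp_ne_one x)).symm

theorem nOrb_Sp_mul_Tp_mul_three [Γ.FiniteIndex] : nOrb (Sp * Tp) Γ * 3 = Γ.index :=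
  (natCard_eq_mul_of_period_eq fun x : PSL2Z ⧸ Γ => period_eq_prime Nat.prime_three Sp_mul_Tp_cube
    (hΓ.smul_ne isOfFinOrder_Sp_mul_Tp Sp_mul_Tp_ne_one x)).symm

theorem genusZero_iff_nOrb_Tp (hidx : Γ.index = 12) : GenusZero Γ ↔ nOrb Tp Γ = 4 := by
  have : Γ.FiniteIndex := ⟨by lia⟩
  have := nOrb_Sp_mul_two hΓ
  have := nOrb_Sp_mul_Tp_mul_three hΓ
  rw [GenusZero]
  lia

theorem exists_short_face (hidx : Γ.index = 12) (hcusps : nOrb Tp Γ = 4) :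
    (∃ x, hΓ.cosetMap.face x = x) ∨ (∃ x, hΓ.cosetMap.face (hΓ.cosetMap.face x) = x) ∨
      ∀ x, hΓ.cosetMap.face (hΓ.cosetMap.face (hΓ.cosetMap.face x)) = x := by
  have : Γ.FiniteIndex := ⟨by lia⟩
  by_contra! h
  simp only [cosetMap_face] at h
  obtain ⟨noLoop, noDigon, x, hx⟩ := h
  have three_le (z : PSL2Z ⧸ Γ) : 3 ≤ MulAction.period Tp z := by
    have pos : 0 < MulAction.period Tp z := Function.minimalPeriod_pos_of_mem_periodicPts
      ((MulAction.injective Tp).mem_periodicPts z)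
    have fixed := MulAction.pow_period_smul Tp z
    by_contra! hlt
    interval_cases MulAction.period Tp z
    · exact noLoop z (by simpa using fixed)
    · exact noDigon z (by rwa [sq, mul_smul] at fixed)
  have period_eq :=
    period_eq_of_natCard_eq_mul three_le (hidx.trans (congrArg (· * 3) hcusps.symm)) x
  have fixed := MulAction.pow_period_smul Tp x
  rw [period_eq, pow_three, mul_smul, mul_smul] at fixed
  exact hx fixed

theorem exists_labels_planarEdges (hidx : Γ.index = 12) (hgenus : GenusZero Γ) :
    ∃ i y, hΓ.cosetMap.Labels y (planarEdges i) := by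
  have : Γ.FiniteIndex := ⟨by lia⟩
  have hcusps := (genusZero_iff_nOrb_Tp hΓ hidx).mp hgenus
  refine (CubicMap.exists_labels (cosetMap_connected hΓ) hidx
    (exists_short_face hΓ hidx hcusps)).resolve_right ?_
  rintro ⟨i, y, hy⟩
  have bijective := hy.dart_bijective (toricEdges_complete i) (cosetMap_connected hΓ) hidx
  rw [nOrb_Tp_eq_card_faces hy (toricEdges_complete i) bijective (faceDarts_face_toricEdges i),
    card_faces_toricEdges] at hcusps
  exact absurd hcusps (by decide)

theorem subgroupConj_of_labels {Δ : Subgroup PSL2Z} (hΔ : TorsionFree Δ) {l : EdgeTable}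
    (hl : l.Complete) {y : Fin 4 → PSL2Z ⧸ Γ} {z : Fin 4 → PSL2Z ⧸ Δ}
    (hy : hΓ.cosetMap.Labels y l) (hz : hΔ.cosetMap.Labels z l)
    (hΓidx : Γ.index = 12) (hΔidx : Δ.index = 12) : SubgroupConj Δ Γ := by
  have : Γ.FiniteIndex := ⟨by lia⟩
  have dart_bijective := hy.dart_bijective hl (cosetMap_connected hΓ) hΓidx
  let e := Equiv.ofBijective _ dart_bijective
  refine subgroupConj_of_equivariant (hΓidx.trans hΔidx.symm) (hΔ.cosetMap.dart z ∘ e.symm)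
    (map_smul_of_submonoidClosure_eq_top submonoidClosure_Sp_Sp_mul_Tp ?_)
  rintro g (rfl | rfl) x <;> obtain ⟨j, rfl⟩ := e.surjective x
  · have edge_y : Sp • e j = e (l.partner j) := hy.edge_dart hl j
    have edge_z : Sp • hΔ.cosetMap.dart z j = _ := hz.edge_dart hl j
    simp only [Function.comp_apply, edge_y, edge_z, e.symm_apply_apply]
  · have rot_y : (Sp * Tp) • e j = e (j.1, j.2 + 1) :=
      CubicMap.rot_dart (M := hΓ.cosetMap) y j.1 j.2
    have rot_z : (Sp * Tp) • hΔ.cosetMap.dart z j = _ :=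
      CubicMap.rot_dart (M := hΔ.cosetMap) z j.1 j.2
    simp only [Function.comp_apply, rot_y, rot_z, e.symm_apply_apply]

end CosetMap

section CongruenceModels

open CongruenceSubgroup ModularGroup

/-- The congruence subgroups of `SL(2,ℤ)` whose images in the modular group represent the six
conjugacy classes, in the order of `planarEdges`. -/
def planarGroup : Fin 6 → Subgroup SL2Z :=
  ![Gamma 3, Gamma0 4 ⊓ Gamma 2, Gamma1 5, Gamma0 8, Gamma0 6, Gamma0 9]

theorem two_le_abs_trace_of_zmod {A : SL2Z} (N : ℕ)
    (h : (A.1.trace : ZMod N) ∉ ({0, 1, -1} : Set (ZMod N))) : 2 ≤ |A.1.trace| := by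
  by_contra! hlt
  obtain ⟨lower, upper⟩ := abs_lt.mp hlt
  interval_cases A.1.trace <;> simp at h

theorem two_le_abs_trace_of_zmod_mul_eq_zero {A : SL2Z} (N : ℕ)
    (hN : ∀ a d : ZMod N, a * d = 1 → a + d ∉ ({0, 1, -1} : Set (ZMod N)))
    (hA : (A 0 1 * A 1 0 : ZMod N) = 0) : 2 ≤ |A.1.trace| := by
  refine two_le_abs_trace_of_zmod N ?_
  rw [trace_fin_two, Int.cast_add]
  refine hN _ _ ?_
  have det := congrArg (Int.cast : ℤ → ZMod N) A.det_coe
  rwa [det_fin_two, Int.cast_sub, Int.cast_mul, Int.cast_mul, hA, sub_zero, Int.cast_one] at det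

theorem two_le_abs_trace_of_mem_planarGroup {i : Fin 6} {A : SL2Z} (hA : A ∈ planarGroup i) :
    2 ≤ |A.1.trace| := by
  fin_cases i
  · obtain ⟨-, h₀₁, h₁₀, -⟩ := Gamma_mem.mp hA
    rw [ZMod.intCast_zmod_eq_zero_iff_dvd] at h₀₁ h₁₀
    refine two_le_abs_trace_of_zmod_mul_eq_zero 9 (by decide) ?_
    rw [← Int.cast_mul, ZMod.intCast_zmod_eq_zero_iff_dvd]
    exact mul_dvd_mul h₀₁ h₁₀
  · exact two_le_abs_trace_of_zmod_mul_eq_zero 4 (by decide)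
      (mul_eq_zero_of_right _ (Gamma0_mem.mp hA.1))
  · obtain ⟨h₀₀, h₁₁, -⟩ := (Gamma1_mem 5 A).mp hA
    refine two_le_abs_trace_of_zmod 5 ?_
    rw [trace_fin_two, Int.cast_add, h₀₀, h₁₁]
    decide
  · exact two_le_abs_trace_of_zmod_mul_eq_zero 8 (by decide)
      (mul_eq_zero_of_right _ (Gamma0_mem.mp hA))
  · exact two_le_abs_trace_of_zmod_mul_eq_zero 6 (by decide)
      (mul_eq_zero_of_right _ (Gamma0_mem.mp hA))
  · exact two_le_abs_trace_of_zmod_mul_eq_zero 9 (by decide)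
      (mul_eq_zero_of_right _ (Gamma0_mem.mp hA))

theorem torsionFree_planarGroup (i : Fin 6) : TorsionFree ((planarGroup i).map xi) :=
  torsionFree_map_xi fun _ => two_le_abs_trace_of_mem_planarGroup

theorem mk_xi_eq_mk_xi_iff {H : Subgroup SL2Z} {A B : SL2Z} :
    (xi A : PSL2Z ⧸ H.map xi) = xi B ↔ A⁻¹ * B ∈ H ∨ -(A⁻¹ * B) ∈ H := by
  rw [QuotientGroup.eq, ← map_inv, ← map_mul, Subgroup.mem_map]
  constructor
  · rintro ⟨C, hC, h⟩
    have hCeq : xi (C⁻¹ * (A⁻¹ * B)) = 1 := by rw [map_mul, map_inv, h, inv_mul_cancel]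
    rcases xi_eq_one_iff.mp hCeq with h | h
    · exact .inl (inv_mul_eq_one.mp h ▸ hC)
    · exact .inr (by rwa [inv_mul_eq_iff_eq_mul.mp h, mul_neg_one, neg_neg])
  · rintro (h | h)
    exacts [⟨_, h, rfl⟩, ⟨_, h, xi_neg _⟩]

instance (i : Fin 6) (A : SL2Z) : Decidable (A ∈ planarGroup i) :=
  match i with
  | 0 => decidable_of_iff _ Gamma_mem.symm
  | 1 => decidable_of_iff _ (and_congr Gamma0_mem Gamma_mem).symm
  | 2 => decidable_of_iff _ (Gamma1_mem 5 A).symm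
  | 3 => decidable_of_iff _ (Gamma0_mem (N := 8)).symm
  | 4 => decidable_of_iff _ (Gamma0_mem (N := 6)).symm
  | 5 => decidable_of_iff _ (Gamma0_mem (N := 9)).symm

/-- Representatives, modulo `planarGroup i`, of the base darts that realise `planarEdges i`. -/
def planarBase : Fin 6 → Fin 4 → SL2Z :=
  let R : SL2Z := ⟨!![1, 0; 1, 1], by decide⟩
  ![![1, S, T, R], ![1, T, R, R * T], ![1, R, T * R, R * T * R], ![1, R, T * R, T * T * R],
    ![1, R, T * R, R * R], ![1, R, T * R, R * R]]

/-- Representatives, modulo `planarGroup i`, of the darts `CubicMap.dart` at the vertices with base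
darts `planarBase i`. -/
def planarDart (i : Fin 6) (j : Fin 4 × Fin 3) : SL2Z := (S * T) ^ j.2.1 * planarBase i j.1

theorem edges_planarDart (i : Fin 6) : ∀ p ∈ planarEdges i,
    (S * planarDart i p.1)⁻¹ * planarDart i p.2 ∈ planarGroup i ∨
      -((S * planarDart i p.1)⁻¹ * planarDart i p.2) ∈ planarGroup i := by
  decide +revert +kernel

theorem eq_of_planarDart_equivalent (i : Fin 6) : ∀ j k,
    (planarDart i j)⁻¹ * planarDart i k ∈ planarGroup i ∨
      -((planarDart i j)⁻¹ * planarDart i k) ∈ planarGroup i → j = k := by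
  decide +revert +kernel

/-- The base darts of the cubic map of `planarGroup i`. -/
def planarLabels (i : Fin 6) (a : Fin 4) : PSL2Z ⧸ (planarGroup i).map xi := xi (planarBase i a)

theorem dart_planarLabels (i : Fin 6) (j : Fin 4 × Fin 3) :
    (torsionFree_planarGroup i).cosetMap.dart (planarLabels i) j = xi (planarDart i j) := by
  rw [planarDart, map_mul, map_pow, map_mul, ← Sp_eq_xi, ← Tp_eq_xi]
  exact smul_iterate_apply (Sp * Tp) j.2 (planarLabels i j.1)

theorem labels_planarLabels (i : Fin 6) :
    (torsionFree_planarGroup i).cosetMap.Labels (planarLabels i) (planarEdges i) := by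
  intro p hp
  rw [dart_planarLabels, dart_planarLabels, ← mk_xi_eq_mk_xi_iff.mpr (edges_planarDart i p hp),
    map_mul, ← Sp_eq_xi]
  rfl

theorem dart_planarLabels_bijective (i : Fin 6) :
    Function.Bijective ((torsionFree_planarGroup i).cosetMap.dart (planarLabels i)) := by
  refine ⟨fun j k h => ?_, (labels_planarLabels i).dart_surjective (planarEdges_complete i)
    (cosetMap_connected _)⟩
  rw [dart_planarLabels, dart_planarLabels] at h
  exact eq_of_planarDart_equivalent i j k (mk_xi_eq_mk_xi_iff.mp h)

theorem index_planarGroup (i : Fin 6) : ((planarGroup i).map xi).index = 12 :=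
  (Nat.card_eq_of_bijective _ (dart_planarLabels_bijective i)).symm.trans (by simp)

theorem genusZero_planarGroup (i : Fin 6) : GenusZero ((planarGroup i).map xi) := by
  rw [genusZero_iff_nOrb_Tp (torsionFree_planarGroup i) (index_planarGroup i),
    nOrb_Tp_eq_card_faces (labels_planarLabels i) (planarEdges_complete i)
      (dart_planarLabels_bijective i) (faceDarts_face_planarEdges i), card_faces_planarEdges]

-- For `n = 1, 2` the counts are `(0, 0)`, `(0, 4)`, `(2, 2)`, `(2, 4)`, `(1, 3)` and `(3, 3)`.
theorem eq_of_card_fixed_planarEdges_eq (i j : Fin 6)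
    (h : ∀ n ∈ [1, 2], Fintype.card {d // (planarEdges i).face^[n] d = d} =
      Fintype.card {d // (planarEdges j).face^[n] d = d}) : i = j := by
  decide +revert +kernel

theorem eq_of_subgroupConj_planarGroup (i j : Fin 6)
    (h : SubgroupConj ((planarGroup i).map xi) ((planarGroup j).map xi)) : i = j := by
  refine eq_of_card_fixed_planarEdges_eq i j fun n _ => ?_
  have card_fixed (k : Fin 6) := nFix_Tp_pow_eq_card (labels_planarLabels k)
    (planarEdges_complete k) (dart_planarLabels_bijective k) n
  rw [← card_fixed, ← card_fixed]
  exact h.natCard_fixed_eq (Tp ^ n)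

end CongruenceModels

theorem exists_subgroupConj_planarGroup {Γ : Subgroup PSL2Z} (hΓ : TorsionFree Γ)
    (hidx : Γ.index = 12) (hgenus : GenusZero Γ) :
    ∃ i, SubgroupConj Γ ((planarGroup i).map xi) := by
  obtain ⟨i, y, hy⟩ := exists_labels_planarEdges hΓ hidx hgenus
  exact ⟨i, subgroupConj_of_labels (torsionFree_planarGroup i) hΓ (planarEdges_complete i)
    (labels_planarLabels i) hy (index_planarGroup i) hidx⟩

/-- There are exactly 6 conjugacy classes of torsion-free genus-zero subgroups of
`PSL(2,ℤ)` of index 12. -/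
theorem count_tf_index_twelve :
    countClasses (fun Γ => Γ.index = 12 ∧ GenusZero Γ ∧ TorsionFree Γ) = 6 := by
  have card_classes := card_quot_subgroupConj
    (P := fun Γ => Γ.index = 12 ∧ GenusZero Γ ∧ TorsionFree Γ) (fun i => (planarGroup i).map xi)
    (fun i => ⟨index_planarGroup i, genusZero_planarGroup i, torsionFree_planarGroup i⟩)
    (fun _ ⟨hidx, hgenus, hΓ⟩ => exists_subgroupConj_planarGroup hΓ hidx hgenus)
    eq_of_subgroupConj_planarGroup
  exact card_classes.trans (Nat.card_fin 6)
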